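/- Let Φ ∈ Δ₂ be a Young function and φ ∈ 𝒢^dec satisfying ∫_r^∞ φ(t)/t dt ≤ Cφ(r). Then the Orlicz–Campanato space modulo constants equals the Orlicz–Morrey space: for every f ∈ 𝓛^{(Φ,φ)}(ℝⁿ), the limit σ(f)=lim_{r→∞} f_{B(0,r)} exists, f − σ(f) ∈ L^{(Φ,φ)}(ℝⁿ), and ‖f‖_{𝓛^{(Φ,φ)}} is comparable to ‖f − σ(f)‖_{L^{(Φ,φ)}} with constants independent of f; conversely every f ∈ L^{(Φ,φ)}(ℝⁿ) lies in 𝓛^{(Φ,φ)}(ℝⁿ) with σ(f)=0 and ‖f‖_{𝓛^{(Φ,φ)}} ≤ 3‖f‖_{L^{(Φ,φ)}}. -/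

import Mathlib

open MeasureTheory Set Metric Filter NNReal ENNReal Topology

noncomputable section

/-- Generalized inverse in the sense of O'Neil. -/
def ginv (Φ : ℝ≥0∞ → ℝ≥0∞) (u : ℝ≥0∞) : ℝ≥0∞ :=
  if u = ⊤ then ⊤ else sInf {t | u < Φ t}

/-- A Young function: increasing, convex, vanishing at 0, left continuous,
not identically zero nor identically infinite. -/
structure IsYoung (Φ : ℝ≥0∞ → ℝ≥0∞) : Prop where
  mono : Monotone Φ
  zero : Φ 0 = 0
  top : Φ ⊤ = ⊤
  conv : ∀ (x y : ℝ≥0∞) (a b : ℝ≥0), a + b = 1 →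
    Φ ((a : ℝ≥0∞) * x + (b : ℝ≥0∞) * y) ≤ (a : ℝ≥0∞) * Φ x + (b : ℝ≥0∞) * Φ y
  lcont : ∀ t : ℝ≥0∞, t < sInf {s | Φ s = ⊤} →
    Filter.Tendsto Φ (nhdsWithin t (Set.Iio t)) (nhds (Φ t))
  pos : ∃ t, 0 < t ∧ Φ t ≠ ⊤
  fin : ∃ t, t ≠ ⊤ ∧ Φ t ≠ 0

/-- `θ` is almost decreasing on `(0,∞)`. -/
def AlmostDecreasingOn (θ : ℝ → ℝ) : Prop :=
  ∃ C : ℝ, 0 < C ∧ ∀ r s : ℝ, 0 < r → r < s → θ s ≤ C * θ r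

/-- `θ` is almost increasing on `(0,∞)`. -/
def AlmostIncreasingOn (θ : ℝ → ℝ) : Prop :=
  ∃ C : ℝ, 0 < C ∧ ∀ r s : ℝ, 0 < r → r < s → θ r ≤ C * θ s

/-- The class `𝒢^dec`: positive, almost decreasing `φ` with `r ↦ φ(r) rⁿ` almost increasing. -/
def Gdec (n : ℕ) (φ : ℝ → ℝ) : Prop :=
  (∀ r : ℝ, 0 < r → 0 < φ r) ∧ AlmostDecreasingOn φ ∧
    AlmostIncreasingOn (fun r => φ r * r ^ n)

variable {n : ℕ}

/-- The Orlicz–Morrey "norm" of `f` on the ball `B(a,r)`. -/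
def ballNorm (Φ : ℝ≥0∞ → ℝ≥0∞) (φ : ℝ → ℝ)
    (f : EuclideanSpace ℝ (Fin n) → ℝ) (a : EuclideanSpace ℝ (Fin n)) (r : ℝ) : ℝ≥0∞ :=
  sInf {lam : ℝ≥0∞ | 0 < lam ∧
    (ENNReal.ofReal (φ r))⁻¹ * ((volume (ball a r))⁻¹ *
      ∫⁻ x in ball a r, Φ (ENNReal.ofReal |f x| / lam)) ≤ 1}

/-- The Orlicz–Morrey norm `‖f‖_{L^{(Φ,φ)}}`: supremum over all balls of `ballNorm`. -/
def omNorm (Φ : ℝ≥0∞ → ℝ≥0∞) (φ : ℝ → ℝ) (f : EuclideanSpace ℝ (Fin n) → ℝ) : ℝ≥0∞ :=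
  ⨆ (a : EuclideanSpace ℝ (Fin n)) (r : ℝ) (_ : 0 < r), ballNorm Φ φ f a r

/-- The Orlicz–Campanato norm `‖f‖_{𝓛^{(Φ,φ)}} = sup_B ‖f − f_B‖_{Φ,φ,B}`. -/
def campNorm (Φ : ℝ≥0∞ → ℝ≥0∞) (φ : ℝ → ℝ) (f : EuclideanSpace ℝ (Fin n) → ℝ) : ℝ≥0∞ :=
  ⨆ (a : EuclideanSpace ℝ (Fin n)) (r : ℝ) (_ : 0 < r),
    ballNorm Φ φ (fun x => f x - ⨍ y in ball a r, f y) a r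

/-!
On a ball `B(a, r)` with its uniform probability measure, `ballNorm` is a Luxemburg norm at level
`φ r`. Jensen's inequality bounds the mean of `|f|` by `Φ⁻¹(φ r) ‖f‖`, and a constant `c` has norm
at most `|c| / Φ⁻¹(φ r)`. Hence `‖f - f_B‖ ≤ 2 ‖f‖` on each ball, and `f_B` inherits the decay of
`Φ⁻¹(φ r)`.

Restricting `∫_r^∞ φ(t)/t dt ≤ C φ(r)` to `(r, R r)` gives `log R * φ(R r) ≤ K φ(r)`, so for large
`R` the value `φ(R r)` is smaller than `φ(r)` by the `Δ₂` constant, and `r ↦ R r` halves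
`Φ⁻¹(φ r)`. The averages of `f` over `B(a, R ^ k r)` then converge geometrically, with a limit `σ`
independent of `a` and `r`, and `|f_{B(a, r)} - σ| ≤ R ^ n Φ⁻¹(φ r) ‖f‖_𝓛`. As a constant function
on `B(a, r)`, the difference `f_{B(a, r)} - σ` therefore has norm at most `R ^ n ‖f‖_𝓛`.
-/

open scoped ProbabilityTheory

theorem le_ginv_of_apply_le {Φ : ℝ≥0∞ → ℝ≥0∞} (hΦ : Monotone Φ) {t u : ℝ≥0∞} (h : Φ t ≤ u) :
    t ≤ ginv Φ u := by
  rw [ginv]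
  split_ifs
  · exact le_top
  · exact le_sInf fun x hx => (hΦ.reflect_lt (h.trans_lt hx)).le

theorem apply_le_of_lt_ginv {Φ : ℝ≥0∞ → ℝ≥0∞} {t u : ℝ≥0∞} (h : t < ginv Φ u) : Φ t ≤ u := by
  rw [ginv] at h
  split_ifs at h with hu
  · exact hu ▸ le_top
  · exact not_lt.1 fun hlt => (sInf_le (a := t) hlt).not_gt h

theorem ginv_le_of_lt_apply {Φ : ℝ≥0∞ → ℝ≥0∞} {t u : ℝ≥0∞} (h : u < Φ t) : ginv Φ u ≤ t := by
  rw [ginv, if_neg h.ne_top]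
  exact sInf_le h

namespace IsYoung

variable {Φ : ℝ≥0∞ → ℝ≥0∞}

theorem apply_mul_le (hY : IsYoung Φ) {a : ℝ≥0} (ha : a ≤ 1) (t : ℝ≥0∞) :
    Φ (a * t) ≤ a * Φ t := by
  simpa [hY.zero] using hY.conv t 0 a (1 - a) (add_tsub_cancel_of_le ha)

theorem natCast_mul_apply_le (hY : IsYoung Φ) (k : ℕ) (t : ℝ≥0∞) : k * Φ t ≤ Φ (k * t) := by
  rcases k.eq_zero_or_pos with rfl | hk
  · simp
  have hk₀ : (k : ℝ≥0∞) ≠ 0 := by exact_mod_cast hk.ne'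
  have hk_inv : ((k⁻¹ : ℝ≥0) : ℝ≥0∞) = (k : ℝ≥0∞)⁻¹ := by
    rw [ENNReal.coe_inv (by exact_mod_cast hk.ne'), ENNReal.coe_natCast]
  have h := hY.apply_mul_le (a := (k : ℝ≥0)⁻¹)
    (inv_le_one_of_one_le₀ (by exact_mod_cast hk)) (k * t)
  rw [hk_inv, ← mul_assoc, ENNReal.inv_mul_cancel hk₀ (by finiteness), one_mul,
    mul_comm (k : ℝ≥0∞)⁻¹, ← div_eq_mul_inv] at h
  exact ENNReal.mul_le_of_le_div' h

theorem ginv_pos (hY : IsYoung Φ) {u : ℝ≥0∞} (hu : u ≠ 0) : 0 < ginv Φ u := by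
  obtain ⟨t, ht, htop⟩ := hY.pos
  obtain ⟨a, ha, hau⟩ := ENNReal.exists_nnreal_pos_mul_lt htop hu
  have hb : 0 < ((min a 1 : ℝ≥0) : ℝ≥0∞) := by simp [ha]
  refine (ENNReal.mul_pos hb.ne' ht.ne').trans_le (le_ginv_of_apply_le hY.mono ?_)
  calc Φ ((min a 1 : ℝ≥0) * t) ≤ (min a 1 : ℝ≥0) * Φ t := hY.apply_mul_le (min_le_right a 1) t
    _ ≤ a * Φ t := by gcongr; exact min_le_left a 1
    _ ≤ u := hau.le

theorem ginv_ne_top (hY : IsYoung Φ) {u : ℝ≥0∞} (hu : u ≠ ⊤) : ginv Φ u ≠ ⊤ := by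
  obtain ⟨t, ht, h₀⟩ := hY.fin
  obtain ⟨k, hk⟩ := ENNReal.exists_nat_mul_gt h₀ hu
  exact ne_top_of_le_ne_top (by finiteness)
    (ginv_le_of_lt_apply (hk.trans_le (hY.natCast_mul_apply_le k t)))

theorem apply_add_div_add_le (hY : IsYoung Φ) {l m : ℝ≥0} (hl : l ≠ 0) (hm : m ≠ 0)
    (x y : ℝ≥0∞) :
    Φ ((x + y) / (l + m)) ≤
      (l / (l + m) : ℝ≥0) * Φ (x / l) + (m / (l + m) : ℝ≥0) * Φ (y / m) := by
  have hlm : l + m ≠ 0 := by simp [hl]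
  have weight_mul_div : ∀ {k : ℝ≥0}, k ≠ 0 → ∀ z : ℝ≥0∞,
      ((k / (l + m) : ℝ≥0) : ℝ≥0∞) * (z / k) = z / (l + m) := by
    intro k hk z
    rw [ENNReal.coe_div hlm, ENNReal.coe_add, ← ENNReal.mul_div_right_comm,
      ENNReal.mul_div_cancel (by exact_mod_cast hk) (by finiteness)]
  rw [ENNReal.add_div, ← weight_mul_div hl x, ← weight_mul_div hm y]
  exact hY.conv _ _ _ _ (by rw [← add_div, div_self hlm])

theorem convexOn_toReal_apply_ofReal (hY : IsYoung Φ) (hfin : ∀ t ≠ ⊤, Φ t ≠ ⊤) :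
    ConvexOn ℝ univ fun t : ℝ => (Φ (ENNReal.ofReal t)).toReal := by
  refine ⟨convex_univ, fun x _ y _ a b ha hb hab => ?_⟩
  have hx := hfin (ENNReal.ofReal x) ENNReal.ofReal_ne_top
  have hy := hfin (ENNReal.ofReal y) ENNReal.ofReal_ne_top
  have hle : Φ (ENNReal.ofReal (a * x + b * y)) ≤ ENNReal.ofReal a * Φ (ENNReal.ofReal x) +
      ENNReal.ofReal b * Φ (ENNReal.ofReal y) := by
    refine le_trans (hY.mono ?_) (hY.conv _ _ a.toNNReal b.toNNReal ?_)
    · exact ENNReal.ofReal_add_le.trans_eq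
        (congrArg₂ _ (ENNReal.ofReal_mul ha) (ENNReal.ofReal_mul hb))
    · rw [← Real.toNNReal_add ha hb, hab, Real.toNNReal_one]
  calc (Φ (ENNReal.ofReal (a * x + b * y))).toReal
    _ ≤ (ENNReal.ofReal a * Φ (ENNReal.ofReal x) +
          ENNReal.ofReal b * Φ (ENNReal.ofReal y)).toReal :=
        ENNReal.toReal_mono (by finiteness) hle
    _ = a * (Φ (ENNReal.ofReal x)).toReal + b * (Φ (ENNReal.ofReal y)).toReal := by
        rw [ENNReal.toReal_add (by finiteness) (by finiteness), ENNReal.toReal_mul,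
          ENNReal.toReal_mul, ENNReal.toReal_ofReal ha, ENNReal.toReal_ofReal hb]

theorem apply_lintegral_le {α : Type*} [MeasurableSpace α] {P : Measure α}
    [IsProbabilityMeasure P] (hY : IsYoung Φ) (hfin : ∀ t ≠ ⊤, Φ t ≠ ⊤) {F : α → ℝ≥0∞}
    (hF : AEMeasurable F P) (hFint : ∫⁻ x, F x ∂P ≠ ⊤) :
    Φ (∫⁻ x, F x ∂P) ≤ ∫⁻ x, Φ (F x) ∂P := by
  by_cases hΦint : ∫⁻ x, Φ (F x) ∂P = ⊤
  · exact hΦint ▸ le_top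
  have hΦF : AEMeasurable (fun x => Φ (F x)) P := hY.mono.measurable.comp_aemeasurable hF
  have hFtop : ∀ᵐ x ∂P, F x < ⊤ := ae_lt_top' hF hFint
  have hcomp : (fun x => (Φ (F x)).toReal) =ᵐ[P]
      fun x => (Φ (ENNReal.ofReal (F x).toReal)).toReal := by
    filter_upwards [hFtop] with x hx
    rw [ENNReal.ofReal_toReal hx.ne]
  have hconv := hY.convexOn_toReal_apply_ofReal hfin
  have jensen := hconv.map_integral_le (hconv.continuousOn isOpen_univ) isClosed_univ
    (Eventually.of_forall fun _ => mem_univ _) (integrable_toReal_of_lintegral_ne_top hF hFint)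
    ((integrable_toReal_of_lintegral_ne_top hΦF hΦint).congr hcomp)
  rw [← integral_congr_ae hcomp, integral_toReal hF hFtop,
    integral_toReal hΦF (ae_lt_top' hΦF hΦint), ENNReal.ofReal_toReal hFint] at jensen
  exact (ENNReal.toReal_le_toReal (hfin _ hFint) hΦint).1 jensen

end IsYoung

/-- The condition `Φ ∈ Δ₂` with an explicit doubling constant `D`. -/
def IsDelta2With (D : ℝ) (Φ : ℝ≥0∞ → ℝ≥0∞) : Prop :=
  ∀ t : ℝ≥0∞, 0 < t → Φ (2 * t) ≤ ENNReal.ofReal D * Φ t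

theorem exists_le_two_pow_mul {s t : ℝ≥0∞} (hs : s ≠ 0) (ht : t ≠ ⊤) : ∃ k : ℕ, t ≤ 2 ^ k * s := by
  obtain ⟨k, hk⟩ := ENNReal.exists_nat_mul_gt hs ht
  refine ⟨k, hk.le.trans ?_⟩
  gcongr
  exact_mod_cast Nat.lt_two_pow_self.le

namespace IsDelta2With

variable {Φ : ℝ≥0∞ → ℝ≥0∞} {D : ℝ}

theorem apply_two_pow_mul_le (hΔ : IsDelta2With D Φ) (k : ℕ) {t : ℝ≥0∞} (ht : 0 < t) :
    Φ (2 ^ k * t) ≤ ENNReal.ofReal D ^ k * Φ t := by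
  induction k with
  | zero => simp
  | succ k ih =>
    calc Φ (2 ^ (k + 1) * t) = Φ (2 * (2 ^ k * t)) := by ring_nf
      _ ≤ ENNReal.ofReal D * Φ (2 ^ k * t) := hΔ _ (by positivity)
      _ ≤ ENNReal.ofReal D * (ENNReal.ofReal D ^ k * Φ t) := by gcongr
      _ = ENNReal.ofReal D ^ (k + 1) * Φ t := by ring

theorem apply_ne_top (hΔ : IsDelta2With D Φ) (hY : IsYoung Φ) {t : ℝ≥0∞} (ht : t ≠ ⊤) :
    Φ t ≠ ⊤ := by
  obtain ⟨s, hs, hs_top⟩ := hY.pos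
  obtain ⟨k, hk⟩ := exists_le_two_pow_mul hs.ne' ht
  exact ne_top_of_le_ne_top (by finiteness) ((hY.mono hk).trans (hΔ.apply_two_pow_mul_le k hs))

theorem apply_pos (hΔ : IsDelta2With D Φ) (hY : IsYoung Φ) {t : ℝ≥0∞} (ht : 0 < t) :
    0 < Φ t := by
  obtain ⟨s, hs, hs₀⟩ := hY.fin
  obtain ⟨k, hk⟩ := exists_le_two_pow_mul ht.ne' hs
  have hle := (hY.mono hk).trans (hΔ.apply_two_pow_mul_le k ht)
  refine pos_iff_ne_zero.2 fun h => hs₀ ?_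
  simpa [h] using hle

theorem two_mul_ginv_le (hΔ : IsDelta2With D Φ) (hY : IsYoung Φ) {u v : ℝ≥0∞}
    (huv : ENNReal.ofReal D * u ≤ v) : 2 * ginv Φ u ≤ ginv Φ v := by
  rw [ginv.eq_def Φ v]
  split_ifs
  · exact le_top
  refine le_sInf fun t ht => ?_
  have htwo : 2 * (t / 2) = t := ENNReal.mul_div_cancel two_ne_zero ENNReal.ofNat_ne_top
  have hpos : 0 < t / 2 := by
    refine ENNReal.half_pos ?_
    rintro rfl
    simp [hY.zero] at ht
  have hdouble : ENNReal.ofReal D * u < ENNReal.ofReal D * Φ (t / 2) :=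
    calc ENNReal.ofReal D * u ≤ v := huv
      _ < Φ t := ht
      _ ≤ ENNReal.ofReal D * Φ (t / 2) := by simpa only [htwo] using hΔ (t / 2) hpos
  calc 2 * ginv Φ u ≤ 2 * (t / 2) := by
        gcongr
        exact ginv_le_of_lt_apply (lt_of_mul_lt_mul_left' hdouble)
    _ = t := htwo

theorem tendsto_ginv_zero (hΔ : IsDelta2With D Φ) (hY : IsYoung Φ) :
    Tendsto (ginv Φ) (𝓝 0) (𝓝 0) := by
  refine ENNReal.tendsto_nhds_zero.2 fun ε hε => ?_
  filter_upwards [gt_mem_nhds (hΔ.apply_pos hY hε)] with u hu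
  exact ginv_le_of_lt_apply hu

end IsDelta2With

/-- The Luxemburg norm `inf {λ > 0 : ∫ Φ(‖f‖ / λ) dμ ≤ u}` at level `u`. The functional `ballNorm`
is the case where `μ` is the uniform probability measure on `B(a, r)` and `u = φ r`. -/
def luxemburgNorm {α β : Type*} [MeasurableSpace α] [NormedAddCommGroup β] (Φ : ℝ≥0∞ → ℝ≥0∞)
    (u : ℝ≥0∞) (f : α → β) (μ : Measure α) : ℝ≥0∞ :=
  sInf {lam : ℝ≥0∞ | 0 < lam ∧ ∫⁻ x, Φ (‖f x‖ₑ / lam) ∂μ ≤ u}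

section Luxemburg

variable {α β : Type*} [MeasurableSpace α] [NormedAddCommGroup β] {Φ : ℝ≥0∞ → ℝ≥0∞} {u : ℝ≥0∞}
  {f g : α → β} {μ P : Measure α} [IsProbabilityMeasure P]

theorem lintegral_apply_enorm_add_div_add_le (hY : IsYoung Φ) (hg : AEStronglyMeasurable g μ)
    {l m : ℝ≥0} (hl : l ≠ 0) (hm : m ≠ 0) (hfl : ∫⁻ x, Φ (‖f x‖ₑ / l) ∂μ ≤ u)
    (hgm : ∫⁻ x, Φ (‖g x‖ₑ / m) ∂μ ≤ u) : ∫⁻ x, Φ (‖f x + g x‖ₑ / (l + m)) ∂μ ≤ u := by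
  have hgΦ : AEMeasurable (fun x => Φ (‖g x‖ₑ / m)) μ :=
    hY.mono.measurable.comp_aemeasurable (hg.enorm.div_const _)
  calc ∫⁻ x, Φ (‖f x + g x‖ₑ / (l + m)) ∂μ
    _ ≤ ∫⁻ x, ((l / (l + m) : ℝ≥0) * Φ (‖f x‖ₑ / l) +
          (m / (l + m) : ℝ≥0) * Φ (‖g x‖ₑ / m)) ∂μ := by
        refine lintegral_mono fun x => le_trans (hY.mono ?_) (hY.apply_add_div_add_le hl hm _ _)
        gcongr
        exact enorm_add_le _ _
    _ = (l / (l + m) : ℝ≥0) * ∫⁻ x, Φ (‖f x‖ₑ / l) ∂μ +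
          (m / (l + m) : ℝ≥0) * ∫⁻ x, Φ (‖g x‖ₑ / m) ∂μ := by
        rw [lintegral_add_right' _ (hgΦ.const_mul _), lintegral_const_mul' _ _ ENNReal.coe_ne_top,
          lintegral_const_mul' _ _ ENNReal.coe_ne_top]
    _ ≤ (l / (l + m) : ℝ≥0) * u + (m / (l + m) : ℝ≥0) * u := by gcongr
    _ = u := by
        rw [← add_mul, ← ENNReal.coe_add, ← add_div, div_self (by simp [hl]), ENNReal.coe_one,
          one_mul]

theorem luxemburgNorm_add_le (hY : IsYoung Φ) (hg : AEStronglyMeasurable g μ) :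
    luxemburgNorm Φ u (fun x => f x + g x) μ ≤ luxemburgNorm Φ u f μ + luxemburgNorm Φ u g μ := by
  rw [luxemburgNorm.eq_def Φ u f, ENNReal.sInf_add]
  refine le_iInf₂ fun l ⟨hl, hfl⟩ => ?_
  rw [luxemburgNorm.eq_def Φ u g, add_comm, ENNReal.sInf_add]
  refine le_iInf₂ fun m ⟨hm, hgm⟩ => ?_
  rw [add_comm]
  rcases eq_or_ne l ⊤ with rfl | hl_top
  · simp
  rcases eq_or_ne m ⊤ with rfl | hm_top
  · simp
  lift l to ℝ≥0 using hl_top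
  lift m to ℝ≥0 using hm_top
  exact sInf_le ⟨add_pos_of_pos_of_nonneg hl zero_le, lintegral_apply_enorm_add_div_add_le hY hg
    (by exact_mod_cast hl.ne') (by exact_mod_cast hm.ne') hfl hgm⟩

theorem luxemburgNorm_const_le (hu : ginv Φ u ≠ 0) (c : β) :
    luxemburgNorm Φ u (fun _ => c) P ≤ ‖c‖ₑ / ginv Φ u := by
  refine le_of_forall_gt_imp_ge_of_dense fun l hl => ?_
  have hl₀ : l ≠ 0 := hl.ne_bot
  have hlt : ‖c‖ₑ / l < ginv Φ u := by
    rw [ENNReal.div_lt_iff (.inl hu) (.inr enorm_ne_top), mul_comm] at hl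
    exact (ENNReal.div_lt_iff (.inl hl₀) (.inr enorm_ne_top)).2 hl
  refine sInf_le ⟨pos_iff_ne_zero.2 hl₀, ?_⟩
  rw [lintegral_const, measure_univ, mul_one]
  exact apply_le_of_lt_ginv hlt

theorem lintegral_enorm_le_ginv_mul_luxemburgNorm (hY : IsYoung Φ) (hfin : ∀ t ≠ ⊤, Φ t ≠ ⊤)
    (hu₀ : u ≠ 0) (hu : u ≠ ⊤) (hf : Integrable f P) :
    ∫⁻ x, ‖f x‖ₑ ∂P ≤ ginv Φ u * luxemburgNorm Φ u f P := by
  have hg₀ := (hY.ginv_pos hu₀).ne'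
  rw [mul_comm, ← ENNReal.div_le_iff hg₀ (hY.ginv_ne_top hu)]
  refine le_sInf fun l ⟨hl, hfl⟩ => ?_
  have hmean : (∫⁻ x, ‖f x‖ₑ ∂P) / l = ∫⁻ x, ‖f x‖ₑ / l ∂P := by
    simp only [div_eq_mul_inv]
    rw [lintegral_mul_const' _ _ (ENNReal.inv_ne_top.2 hl.ne')]
  have hmean_le : (∫⁻ x, ‖f x‖ₑ ∂P) / l ≤ ginv Φ u := by
    refine le_ginv_of_apply_le hY.mono (le_trans ?_ hfl)
    rw [hmean]
    refine hY.apply_lintegral_le hfin (hf.1.enorm.div_const _) ?_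
    rw [← hmean]
    exact ENNReal.div_ne_top hf.2.ne hl.ne'
  rw [ENNReal.div_le_iff hg₀ (hY.ginv_ne_top hu), mul_comm]
  exact (ENNReal.div_le_iff_le_mul (.inl hl.ne') (.inr hg₀)).1 hmean_le

variable [NormedSpace ℝ β]

theorem luxemburgNorm_sub_integral_le (hY : IsYoung Φ) (hfin : ∀ t ≠ ⊤, Φ t ≠ ⊤)
    (hu₀ : u ≠ 0) (hu : u ≠ ⊤) (hf : Integrable f P) :
    luxemburgNorm Φ u (fun x => f x - ∫ y, f y ∂P) P ≤ 2 * luxemburgNorm Φ u f P := by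
  have hg₀ := (hY.ginv_pos hu₀).ne'
  have hmean : luxemburgNorm Φ u (fun _ => -∫ y, f y ∂P) P ≤ luxemburgNorm Φ u f P :=
    calc luxemburgNorm Φ u (fun _ => -∫ y, f y ∂P) P ≤ ‖-∫ y, f y ∂P‖ₑ / ginv Φ u :=
          luxemburgNorm_const_le hg₀ _
      _ ≤ (ginv Φ u * luxemburgNorm Φ u f P) / ginv Φ u := by
          rw [enorm_neg]
          gcongr
          exact (enorm_integral_le_lintegral_enorm f).trans
            (lintegral_enorm_le_ginv_mul_luxemburgNorm hY hfin hu₀ hu hf)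
      _ = luxemburgNorm Φ u f P := by
          rw [mul_comm, ENNReal.mul_div_cancel_right hg₀ (hY.ginv_ne_top hu)]
  simp only [sub_eq_add_neg]
  rw [two_mul]
  exact (luxemburgNorm_add_le hY aestronglyMeasurable_const).trans (by gcongr)

end Luxemburg

section Averages

variable {α E : Type*} [MeasurableSpace α] [NormedAddCommGroup E]

theorem cond_le_smul_cond {μ : Measure α} {s t : Set α} (hst : s ⊆ t) (ht₀ : μ t ≠ 0)
    (ht : μ t ≠ ⊤) : μ[|s] ≤ (μ t / μ s) • μ[|t] := by
  rw [ProbabilityTheory.cond, ProbabilityTheory.cond, smul_smul, div_eq_mul_inv,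
    mul_right_comm, ENNReal.mul_inv_cancel ht₀ ht, one_mul]
  gcongr

theorem isProbabilityMeasure_cond_ball {X : Type*} [PseudoMetricSpace X] [ProperSpace X]
    [MeasurableSpace X] (μ : Measure X) [μ.IsOpenPosMeasure] [IsFiniteMeasureOnCompacts μ] (a : X)
    {r : ℝ} (hr : 0 < r) : IsProbabilityMeasure μ[|ball a r] :=
  ProbabilityTheory.cond_isProbabilityMeasure_of_finite (measure_ball_pos μ a hr).ne'
    measure_ball_lt_top.ne

theorem integrable_cond_ball {X : Type*} [PseudoMetricSpace X] [ProperSpace X] [MeasurableSpace X]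
    {μ : Measure X} [μ.IsOpenPosMeasure] {f : X → E} (hf : LocallyIntegrable f μ) (a : X) {r : ℝ}
    (hr : 0 < r) : Integrable f μ[|ball a r] :=
  ((hf.integrableOn_isCompact (isCompact_closedBall a r)).mono_set
    ball_subset_closedBall).smul_measure (ENNReal.inv_ne_top.2 (measure_ball_pos μ a hr).ne')

variable [NormedSpace ℝ E]

theorem integral_sub_const_of_isProbabilityMeasure [CompleteSpace E] {P : Measure α}
    [IsProbabilityMeasure P] {f : α → E} (hf : Integrable f P) (c : E) :
    ∫ x, (f x - c) ∂P = (∫ x, f x ∂P) - c := by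
  rw [integral_sub hf (integrable_const c), integral_const, probReal_univ, one_smul]

theorem addHaar_ball_div_addHaar_ball [FiniteDimensional ℝ E] [MeasurableSpace E] [BorelSpace E]
    (μ : Measure E) [μ.IsAddHaarMeasure] (a b : E) {r q : ℝ} (hr : 0 < r) (hq : 0 < q) :
    μ (ball b q) / μ (ball a r) = ENNReal.ofReal ((q / r) ^ Module.finrank ℝ E) := by
  rw [Measure.addHaar_ball_of_pos μ b hq, Measure.addHaar_ball_of_pos μ a hr, div_pow,
    ENNReal.mul_div_mul_right _ _ (measure_ball_pos μ 0 one_pos).ne' measure_ball_lt_top.ne,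
    ENNReal.ofReal_div_of_pos (by positivity)]

theorem setAverage_eq_integral_cond (μ : Measure α) (s : Set α) (f : α → E) :
    ⨍ x in s, f x ∂μ = ∫ x, f x ∂μ[|s] :=
  setAverage_eq' μ f s

end Averages

section Decay

variable {φ : ℝ → ℝ} {C : ℝ}

theorem lintegral_Ioo_ofReal_inv {a b : ℝ} (ha : 0 < a) (hab : a ≤ b) :
    ∫⁻ t in Ioo a b, ENNReal.ofReal t⁻¹ = ENNReal.ofReal (Real.log (b / a)) := by
  have hint : IntegrableOn (fun t : ℝ => t⁻¹) (Ioc a b) :=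
    (intervalIntegrable_iff_integrableOn_Ioc_of_le hab).1 <|
      intervalIntegrable_inv_iff.2 (.inr (notMem_uIcc_of_lt ha (ha.trans_le hab)))
  have hnonneg : 0 ≤ᵐ[volume.restrict (Ioc a b)] fun t : ℝ => t⁻¹ :=
    (ae_restrict_mem measurableSet_Ioc).mono fun t ht => inv_nonneg.2 (ha.trans ht.1).le
  rw [restrict_Ioo_eq_restrict_Ioc, ← ofReal_integral_eq_lintegral_ofReal hint hnonneg,
    ← intervalIntegral.integral_of_le hab, integral_inv_of_pos ha (ha.trans_le hab)]

/-- The decay of `φ` encoded by the integral condition `∫_r^∞ φ(t)/t dt ≤ C φ(r)`. -/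
def HasLogDecay (K : ℝ) (φ : ℝ → ℝ) : Prop :=
  ∀ ⦃R r : ℝ⦄, 1 < R → 0 < r → Real.log R * φ (R * r) ≤ K * φ r

theorem exists_hasLogDecay (hpos : ∀ r, 0 < r → 0 < φ r) (hdec : AlmostDecreasingOn φ)
    (hC : 0 < C) (hint : ∀ r : ℝ, 0 < r →
      ∫⁻ t in Ioi r, ENNReal.ofReal (φ t / t) ≤ ENNReal.ofReal (C * φ r)) :
    ∃ K, 0 < K ∧ HasLogDecay K φ := by
  obtain ⟨A, hA, hφA⟩ := hdec
  refine ⟨A * C, by positivity, fun R r hR hr => ?_⟩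
  have hrR : r < R * r := lt_mul_of_one_lt_left hr hR
  have hφr := hpos r hr
  rw [← ENNReal.ofReal_le_ofReal_iff (by positivity)]
  calc ENNReal.ofReal (Real.log R * φ (R * r))
    _ = ∫⁻ t in Ioo r (R * r), ENNReal.ofReal (φ (R * r)) * ENNReal.ofReal t⁻¹ := by
        rw [lintegral_const_mul' _ _ ENNReal.ofReal_ne_top, lintegral_Ioo_ofReal_inv hr hrR.le,
          mul_div_cancel_right₀ R hr.ne', mul_comm, ENNReal.ofReal_mul (hpos _ (hr.trans hrR)).le]
    _ ≤ ∫⁻ t in Ioo r (R * r), ENNReal.ofReal A * ENNReal.ofReal (φ t / t) := by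
        refine setLIntegral_mono' measurableSet_Ioo fun t ht => ?_
        have ht₀ : 0 < t := hr.trans ht.1
        rw [← ENNReal.ofReal_mul (hpos _ (hr.trans hrR)).le, ← ENNReal.ofReal_mul hA.le,
          ← mul_div_assoc, ← div_eq_mul_inv]
        gcongr
        exact hφA t (R * r) ht₀ ht.2
    _ ≤ ENNReal.ofReal A * ENNReal.ofReal (C * φ r) := by
        rw [lintegral_const_mul' _ _ ENNReal.ofReal_ne_top]
        gcongr
        exact (lintegral_mono_set Ioo_subset_Ioi_self).trans (hint r hr)
    _ = ENNReal.ofReal (A * C * φ r) := by rw [← ENNReal.ofReal_mul hA.le, mul_assoc]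

namespace HasLogDecay

variable {K : ℝ}

theorem tendsto_atTop_zero (hφ : HasLogDecay K φ) (hpos : ∀ r, 0 < r → 0 < φ r) :
    Tendsto φ atTop (𝓝 0) := by
  refine squeeze_zero' (g := fun r => K * φ 1 / Real.log r) ?_ ?_
    (tendsto_const_nhds.div_atTop Real.tendsto_log_atTop)
  · filter_upwards [eventually_gt_atTop 0] with r hr using (hpos r hr).le
  · filter_upwards [eventually_gt_atTop 1] with r hr
    rw [le_div_iff₀ (Real.log_pos hr), mul_comm]
    simpa using hφ hr one_pos

theorem exists_mul_le (hφ : HasLogDecay K φ) (hK : 0 < K) {D : ℝ} (hD : 0 < D) :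
    ∃ R, 1 < R ∧ ∀ r, 0 < r → D * φ (R * r) ≤ φ r := by
  have hR : 1 < Real.exp (K * D) := Real.one_lt_exp_iff.2 (by positivity)
  refine ⟨Real.exp (K * D), hR, fun r hr => ?_⟩
  have h := hφ hR hr
  rw [Real.log_exp, mul_assoc] at h
  exact le_of_mul_le_mul_left h hK

end HasLogDecay

end Decay

theorem apply_pow_mul_le_div_two_pow {s : ℝ → ℝ} {R : ℝ} (hR : 0 < R)
    (hs : ∀ r, 0 < r → s (R * r) ≤ s r / 2) {r : ℝ} (hr : 0 < r) (k : ℕ) :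
    s (R ^ k * r) ≤ s r / 2 ^ k := by
  induction k with
  | zero => simp
  | succ k ih =>
    calc s (R ^ (k + 1) * r) = s (R * (R ^ k * r)) := by ring_nf
      _ ≤ s (R ^ k * r) / 2 := hs _ (by positivity)
      _ ≤ s r / 2 ^ k / 2 := by gcongr
      _ = s r / 2 ^ (k + 1) := by rw [div_div, pow_succ]

/-- `F a r`, a quantity attached to the ball `B(a, r)`, changes by at most `(q / r) ^ d * s q` when
`B(a, r)` is enlarged to `B(b, q)`. For `F a r` the average of a function over the ball, `s` bounds
its mean oscillation and `d` is the dimension. -/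
def NestedBallBound {E Y : Type*} [PseudoMetricSpace E] [NormedAddCommGroup Y] (d : ℕ) (s : ℝ → ℝ)
    (F : E → ℝ → Y) : Prop :=
  ∀ ⦃a b : E⦄ ⦃r q : ℝ⦄, 0 < r → r + dist a b ≤ q → ‖F a r - F b q‖ ≤ (q / r) ^ d * s q

namespace NestedBallBound

variable {E Y : Type*} [PseudoMetricSpace E] [NormedAddCommGroup Y] {d : ℕ} {s : ℝ → ℝ}
  {F : E → ℝ → Y} {R : ℝ}

theorem dist_geometric_le (hF : NestedBallBound d s F) (hR : 1 < R)
    (hs : ∀ r, 0 < r → s (R * r) ≤ s r / 2) (a : E) {r : ℝ} (hr : 0 < r) (k : ℕ) :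
    dist (F a (R ^ k * r)) (F a (R ^ (k + 1) * r)) ≤ R ^ d * s r / 2 / 2 ^ k := by
  have hR₀ : 0 < R := one_pos.trans hR
  have hle : R ^ k * r + dist a a ≤ R ^ (k + 1) * r := by
    rw [dist_self, add_zero]
    gcongr
    exacts [hR.le, k.le_succ]
  calc dist (F a (R ^ k * r)) (F a (R ^ (k + 1) * r))
    _ ≤ (R ^ (k + 1) * r / (R ^ k * r)) ^ d * s (R ^ (k + 1) * r) :=
        (dist_eq_norm _ _).trans_le (hF (by positivity) hle)
    _ = R ^ d * s (R ^ (k + 1) * r) := by rw [pow_succ]; field_simp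
    _ ≤ R ^ d * (s r / 2 ^ (k + 1)) := by
        gcongr
        exact apply_pow_mul_le_div_two_pow hR₀ hs hr (k + 1)
    _ = R ^ d * s r / 2 / 2 ^ k := by rw [pow_succ]; field_simp

theorem tendsto_sub_geometric (hF : NestedBallBound d s F) (hR : 1 < R)
    (hs : ∀ r, 0 < r → s (R * r) ≤ s r / 2) {a b : E} {r q : ℝ} (hr : 0 < r)
    (hrq : r + dist a b ≤ q) :
    Tendsto (fun k : ℕ => F a (R ^ k * r) - F b (R ^ k * q)) atTop (𝓝 0) := by
  have hR₀ : 0 < R := one_pos.trans hR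
  have hq : 0 < q := by linarith [dist_nonneg (x := a) (y := b)]
  refine squeeze_zero_norm (a := fun k : ℕ => (q / r) ^ d * (s q / 2 ^ k)) (fun k => ?_) ?_
  · have hnested : R ^ k * r + dist a b ≤ R ^ k * q :=
      calc R ^ k * r + dist a b ≤ R ^ k * r + R ^ k * dist a b := by
            gcongr
            exact le_mul_of_one_le_left dist_nonneg (one_le_pow₀ hR.le)
        _ = R ^ k * (r + dist a b) := by ring
        _ ≤ R ^ k * q := by gcongr
    calc ‖F a (R ^ k * r) - F b (R ^ k * q)‖
      _ ≤ (R ^ k * q / (R ^ k * r)) ^ d * s (R ^ k * q) := hF (by positivity) hnested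
      _ = (q / r) ^ d * s (R ^ k * q) := by rw [mul_div_mul_left _ _ (by positivity)]
      _ ≤ (q / r) ^ d * (s q / 2 ^ k) := by gcongr; exact apply_pow_mul_le_div_two_pow hR₀ hs hq k
  · simpa using ((tendsto_pow_atTop_atTop_of_one_lt (one_lt_two (α := ℝ))).const_div_atTop
      (s q)).const_mul ((q / r) ^ d)

theorem exists_forall_tendsto_geometric [Nonempty E] [CompleteSpace Y]
    (hF : NestedBallBound d s F) (hR : 1 < R) (hs : ∀ r, 0 < r → s (R * r) ≤ s r / 2) :
    ∃ σ, ∀ (a : E) (r : ℝ), 0 < r → Tendsto (fun k : ℕ => F a (R ^ k * r)) atTop (𝓝 σ) := by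
  obtain ⟨o⟩ := ‹Nonempty E›
  obtain ⟨σ, hσ⟩ := cauchySeq_tendsto_of_complete
    (cauchySeq_of_le_geometric_two (hF.dist_geometric_le hR hs o one_pos))
  refine ⟨σ, fun a r hr => ?_⟩
  -- Compare `B(a, r)` and `B(o, 1)` through a ball around `o` containing both.
  have ha := hF.tendsto_sub_geometric hR hs (a := a) (b := o) (q := r + dist a o + 1) hr
    (by linarith)
  have ho := hF.tendsto_sub_geometric hR hs (a := o) (b := o) (q := r + dist a o + 1) one_pos
    (by rw [dist_self]; linarith [dist_nonneg (x := a) (y := o)])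
  simpa using (ha.sub ho).add hσ

theorem exists_forall_norm_sub_le [Nonempty E] [CompleteSpace Y]
    (hF : NestedBallBound d s F) (hR : 1 < R) (hs : ∀ r, 0 < r → s (R * r) ≤ s r / 2) :
    ∃ σ, ∀ (a : E) (r : ℝ), 0 < r → ‖F a r - σ‖ ≤ R ^ d * s r := by
  obtain ⟨σ, hσ⟩ := hF.exists_forall_tendsto_geometric hR hs
  refine ⟨σ, fun a r hr => ?_⟩
  simpa [dist_eq_norm] using
    dist_le_of_le_geometric_two_of_tendsto₀ (hF.dist_geometric_le hR hs a hr) (hσ a r hr)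

end NestedBallBound

section BallNorms

variable {Φ : ℝ≥0∞ → ℝ≥0∞} {φ : ℝ → ℝ} {D r : ℝ} {f : EuclideanSpace ℝ (Fin n) → ℝ}

theorem ballNorm_eq_luxemburgNorm (hφr : 0 < φ r) (f : EuclideanSpace ℝ (Fin n) → ℝ)
    (a : EuclideanSpace ℝ (Fin n)) :
    ballNorm Φ φ f a r = luxemburgNorm Φ (ENNReal.ofReal (φ r)) f volume[|ball a r] := by
  simp only [ballNorm, luxemburgNorm, ProbabilityTheory.cond, lintegral_smul_measure, smul_eq_mul,
    Real.enorm_eq_ofReal_abs, mul_one,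
    ENNReal.inv_mul_le_iff (ENNReal.ofReal_pos.2 hφr).ne' ENNReal.ofReal_ne_top]

theorem ballNorm_le_omNorm (f : EuclideanSpace ℝ (Fin n) → ℝ) (a : EuclideanSpace ℝ (Fin n))
    (hr : 0 < r) : ballNorm Φ φ f a r ≤ omNorm Φ φ f :=
  le_iSup₂_of_le a r (le_iSup_of_le hr le_rfl)

theorem ballNorm_sub_average_le_campNorm (f : EuclideanSpace ℝ (Fin n) → ℝ)
    (a : EuclideanSpace ℝ (Fin n)) (hr : 0 < r) :
    ballNorm Φ φ (fun x => f x - ⨍ y in ball a r, f y) a r ≤ campNorm Φ φ f :=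
  le_iSup₂_of_le a r (le_iSup_of_le (f := fun _ : 0 < r => ballNorm Φ φ _ a r) hr le_rfl)

theorem campNorm_sub_const (hf : LocallyIntegrable f volume) (c : ℝ) :
    campNorm Φ φ (fun x => f x - c) = campNorm Φ φ f := by
  refine iSup_congr fun a => iSup_congr fun r => iSup_congr fun hr => ?_
  have := isProbabilityMeasure_cond_ball volume a hr
  simp only [setAverage_eq_integral_cond, sub_sub_sub_cancel_right,
    integral_sub_const_of_isProbabilityMeasure (integrable_cond_ball hf a hr)]

theorem lintegral_enorm_le_ginv_mul_ballNorm (hY : IsYoung Φ) (hΔ : IsDelta2With D Φ)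
    (hr : 0 < r) (hφr : 0 < φ r) (hf : LocallyIntegrable f volume)
    (a : EuclideanSpace ℝ (Fin n)) :
    ∫⁻ x, ‖f x‖ₑ ∂volume[|ball a r] ≤ ginv Φ (ENNReal.ofReal (φ r)) * ballNorm Φ φ f a r := by
  have := isProbabilityMeasure_cond_ball volume a hr
  rw [ballNorm_eq_luxemburgNorm hφr]
  exact lintegral_enorm_le_ginv_mul_luxemburgNorm hY (fun _ => hΔ.apply_ne_top hY)
    (ENNReal.ofReal_pos.2 hφr).ne' ENNReal.ofReal_ne_top (integrable_cond_ball hf a hr)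

theorem campNorm_le_two_mul_omNorm (hY : IsYoung Φ) (hΔ : IsDelta2With D Φ)
    (hpos : ∀ r, 0 < r → 0 < φ r) (hf : LocallyIntegrable f volume) :
    campNorm Φ φ f ≤ 2 * omNorm Φ φ f := by
  refine iSup₂_le fun a r => iSup_le fun hr => ?_
  have := isProbabilityMeasure_cond_ball volume a hr
  refine le_trans ?_ (mul_le_mul_right (ballNorm_le_omNorm f a hr) 2)
  rw [ballNorm_eq_luxemburgNorm (hpos r hr), ballNorm_eq_luxemburgNorm (hpos r hr),
    setAverage_eq_integral_cond]
  exact luxemburgNorm_sub_integral_le hY (fun _ => hΔ.apply_ne_top hY)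
    (ENNReal.ofReal_pos.2 (hpos r hr)).ne' ENNReal.ofReal_ne_top (integrable_cond_ball hf a hr)

theorem tendsto_ginv_ofReal_mul_atTop (hY : IsYoung Φ) (hΔ : IsDelta2With D Φ)
    (hφ : Tendsto φ atTop (𝓝 0)) {N : ℝ≥0∞} (hN : N ≠ ⊤) :
    Tendsto (fun r => (ginv Φ (ENNReal.ofReal (φ r)) * N).toReal) atTop (𝓝 0) := by
  have hginv : Tendsto (fun r => ginv Φ (ENNReal.ofReal (φ r))) atTop (𝓝 0) :=
    (hΔ.tendsto_ginv_zero hY).comp (by simpa using ENNReal.tendsto_ofReal hφ)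
  have hmul : Tendsto (fun r => ginv Φ (ENNReal.ofReal (φ r)) * N) atTop (𝓝 0) := by
    simpa using ENNReal.Tendsto.mul_const hginv (.inr hN)
  exact (ENNReal.tendsto_toReal ENNReal.zero_ne_top).comp hmul

theorem tendsto_average_of_omNorm_lt_top (hY : IsYoung Φ) (hΔ : IsDelta2With D Φ)
    (hpos : ∀ r, 0 < r → 0 < φ r) (hφ : Tendsto φ atTop (𝓝 0)) (hf : LocallyIntegrable f volume)
    (hfin : omNorm Φ φ f < ⊤) (a : EuclideanSpace ℝ (Fin n)) :
    Tendsto (fun r => ⨍ y in ball a r, f y) atTop (𝓝 0) := by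
  refine squeeze_zero_norm' ?_ (tendsto_ginv_ofReal_mul_atTop hY hΔ hφ hfin.ne)
  filter_upwards [eventually_gt_atTop 0] with r hr
  have hginv := hY.ginv_ne_top (ENNReal.ofReal_ne_top (r := φ r))
  rw [← toReal_enorm, setAverage_eq_integral_cond]
  refine ENNReal.toReal_mono (ENNReal.mul_ne_top hginv hfin.ne) ?_
  calc ‖∫ y, f y ∂volume[|ball a r]‖ₑ ≤ ∫⁻ y, ‖f y‖ₑ ∂volume[|ball a r] :=
        enorm_integral_le_lintegral_enorm f
    _ ≤ ginv Φ (ENNReal.ofReal (φ r)) * ballNorm Φ φ f a r :=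
        lintegral_enorm_le_ginv_mul_ballNorm hY hΔ hr (hpos r hr) hf a
    _ ≤ ginv Φ (ENNReal.ofReal (φ r)) * omNorm Φ φ f := by
        gcongr
        exact ballNorm_le_omNorm f a hr

theorem enorm_average_sub_average_le (hY : IsYoung Φ) (hΔ : IsDelta2With D Φ)
    (hpos : ∀ r, 0 < r → 0 < φ r) (hf : LocallyIntegrable f volume)
    {a b : EuclideanSpace ℝ (Fin n)} {q : ℝ} (hr : 0 < r) (hq : 0 < q)
    (hsub : ball a r ⊆ ball b q) :
    ‖(⨍ y in ball a r, f y) - ⨍ y in ball b q, f y‖ₑ ≤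
      ENNReal.ofReal ((q / r) ^ n) * (ginv Φ (ENNReal.ofReal (φ q)) * campNorm Φ φ f) := by
  have := isProbabilityMeasure_cond_ball volume a hr
  set m := ⨍ y in ball b q, f y
  have hratio : volume (ball b q) / volume (ball a r) = ENNReal.ofReal ((q / r) ^ n) := by
    rw [addHaar_ball_div_addHaar_ball volume a b hr hq, finrank_euclideanSpace_fin]
  calc ‖(⨍ y in ball a r, f y) - m‖ₑ
    _ ≤ ∫⁻ y, ‖f y - m‖ₑ ∂volume[|ball a r] := by
        rw [setAverage_eq_integral_cond,
          ← integral_sub_const_of_isProbabilityMeasure (integrable_cond_ball hf a hr)]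
        exact enorm_integral_le_lintegral_enorm _
    _ ≤ ENNReal.ofReal ((q / r) ^ n) * ∫⁻ y, ‖f y - m‖ₑ ∂volume[|ball b q] := by
        rw [← hratio, ← smul_eq_mul, ← lintegral_smul_measure]
        exact lintegral_mono' (cond_le_smul_cond hsub (measure_ball_pos volume b hq).ne'
          measure_ball_lt_top.ne) le_rfl
    _ ≤ ENNReal.ofReal ((q / r) ^ n) * (ginv Φ (ENNReal.ofReal (φ q)) * campNorm Φ φ f) := by
        gcongr
        refine (lintegral_enorm_le_ginv_mul_ballNorm hY hΔ hq (hpos q hq)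
          (hf.sub (locallyIntegrable_const m)) b).trans ?_
        gcongr
        exact ballNorm_sub_average_le_campNorm f b hq

theorem nestedBallBound_average (hY : IsYoung Φ) (hΔ : IsDelta2With D Φ)
    (hpos : ∀ r, 0 < r → 0 < φ r) (hf : LocallyIntegrable f volume) (hfin : campNorm Φ φ f < ⊤) :
    NestedBallBound n (fun r => (ginv Φ (ENNReal.ofReal (φ r)) * campNorm Φ φ f).toReal)
      (fun a r => ⨍ y in ball a r, f y) := by
  intro a b r q hr hrq
  have hq : 0 < q := by linarith [dist_nonneg (x := a) (y := b)]
  have hginv := hY.ginv_ne_top (ENNReal.ofReal_ne_top (r := φ q))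
  have h := ENNReal.toReal_mono (by finiteness)
    (enorm_average_sub_average_le hY hΔ hpos hf hr hq (ball_subset_ball' hrq))
  rwa [toReal_enorm, ENNReal.toReal_mul, ENNReal.toReal_ofReal (by positivity)] at h

theorem toReal_ginv_mul_le_half (hY : IsYoung Φ) (hΔ : IsDelta2With D Φ) (hD : 0 < D)
    {r' : ℝ} (h : D * φ r' ≤ φ r) (N : ℝ≥0∞) :
    (ginv Φ (ENNReal.ofReal (φ r')) * N).toReal ≤
      (ginv Φ (ENNReal.ofReal (φ r)) * N).toReal / 2 := by
  have hginv := hY.ginv_ne_top (ENNReal.ofReal_ne_top (r := φ r))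
  have hhalf : 2 * ginv Φ (ENNReal.ofReal (φ r')) ≤ ginv Φ (ENNReal.ofReal (φ r)) := by
    refine hΔ.two_mul_ginv_le hY ?_
    rw [← ENNReal.ofReal_mul hD.le]
    exact ENNReal.ofReal_le_ofReal h
  have hreal := ENNReal.toReal_mono hginv hhalf
  rw [ENNReal.toReal_mul, ENNReal.toReal_ofNat] at hreal
  rw [ENNReal.toReal_mul, ENNReal.toReal_mul, mul_div_right_comm]
  gcongr
  linarith

theorem omNorm_sub_const_le (hY : IsYoung Φ) (hpos : ∀ r, 0 < r → 0 < φ r) {K σ : ℝ}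
    (hfin : campNorm Φ φ f < ⊤)
    (hσ : ∀ (a : EuclideanSpace ℝ (Fin n)) (r : ℝ), 0 < r → |(⨍ y in ball a r, f y) - σ| ≤
      K * (ginv Φ (ENNReal.ofReal (φ r)) * campNorm Φ φ f).toReal) :
    omNorm Φ φ (fun x => f x - σ) ≤ (1 + ENNReal.ofReal K) * campNorm Φ φ f := by
  refine iSup₂_le fun a r => iSup_le fun hr => ?_
  have := isProbabilityMeasure_cond_ball volume a hr
  have hginv₀ := (hY.ginv_pos (ENNReal.ofReal_pos.2 (hpos r hr)).ne').ne'
  have hginv := hY.ginv_ne_top (ENNReal.ofReal_ne_top (r := φ r))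
  set N := campNorm Φ φ f
  set u := ENNReal.ofReal (φ r)
  set m := ⨍ y in ball a r, f y
  have hosc : luxemburgNorm Φ u (fun x => f x - m) volume[|ball a r] ≤ N := by
    rw [← ballNorm_eq_luxemburgNorm (hpos r hr)]
    exact ballNorm_sub_average_le_campNorm f a hr
  have hconst : luxemburgNorm Φ u (fun _ => m - σ) volume[|ball a r] ≤ ENNReal.ofReal K * N := by
    refine (luxemburgNorm_const_le hginv₀ _).trans ?_
    rw [ENNReal.div_le_iff hginv₀ hginv, Real.enorm_eq_ofReal_abs]
    calc ENNReal.ofReal |m - σ| ≤ ENNReal.ofReal (K * (ginv Φ u * N).toReal) :=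
          ENNReal.ofReal_le_ofReal (hσ a r hr)
      _ = ENNReal.ofReal K * N * ginv Φ u := by
          rw [ENNReal.ofReal_mul' ENNReal.toReal_nonneg,
            ENNReal.ofReal_toReal (ENNReal.mul_ne_top hginv hfin.ne), mul_comm (ginv Φ u),
            mul_assoc]
  calc ballNorm Φ φ (fun x => f x - σ) a r
    _ = luxemburgNorm Φ u (fun x => (f x - m) + (m - σ)) volume[|ball a r] := by
        simp only [ballNorm_eq_luxemburgNorm (hpos r hr), sub_add_sub_cancel, u]
    _ ≤ N + ENNReal.ofReal K * N :=
        (luxemburgNorm_add_le hY aestronglyMeasurable_const).trans (add_le_add hosc hconst)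
    _ = (1 + ENNReal.ofReal K) * N := by rw [add_mul, one_mul]

theorem exists_tendsto_average_and_omNorm_sub_le (hY : IsYoung Φ) (hΔ : IsDelta2With D Φ)
    (hD : 0 < D) (hpos : ∀ r, 0 < r → 0 < φ r) (hφ : Tendsto φ atTop (𝓝 0)) {R : ℝ} (hR : 1 < R)
    (hφR : ∀ r, 0 < r → D * φ (R * r) ≤ φ r) (hf : LocallyIntegrable f volume)
    (hfin : campNorm Φ φ f < ⊤) :
    ∃ σ : ℝ, (∀ a : EuclideanSpace ℝ (Fin n),
        Tendsto (fun r => ⨍ y in ball a r, f y) atTop (𝓝 σ)) ∧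
      omNorm Φ φ (fun x => f x - σ) ≤ (1 + ENNReal.ofReal (R ^ n)) * campNorm Φ φ f := by
  obtain ⟨σ, hσ⟩ := (nestedBallBound_average hY hΔ hpos hf hfin).exists_forall_norm_sub_le hR
    fun r hr => toReal_ginv_mul_le_half hY hΔ hD (hφR r hr) _
  refine ⟨σ, fun a => ?_, omNorm_sub_const_le hY hpos hfin hσ⟩
  have hbound := (tendsto_ginv_ofReal_mul_atTop hY hΔ hφ hfin.ne).const_mul (R ^ n)
  rw [mul_zero] at hbound
  refine tendsto_iff_dist_tendsto_zero.2
    (squeeze_zero' (Eventually.of_forall fun _ => dist_nonneg) ?_ hbound)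
  filter_upwards [eventually_gt_atTop 0] with r hr using hσ a r hr

end BallNorms

theorem stmt13_general (Φ : ℝ≥0∞ → ℝ≥0∞) (hY : IsYoung Φ)
    (hΔ : ∃ C : ℝ, 0 < C ∧ ∀ t : ℝ≥0∞, 0 < t → Φ (2 * t) ≤ ENNReal.ofReal C * Φ t)
    (φ : ℝ → ℝ) (hpos : ∀ r : ℝ, 0 < r → 0 < φ r) (hdec : AlmostDecreasingOn φ) (C : ℝ)
    (hC : 0 < C)
    (hint : ∀ r : ℝ, 0 < r →
      ∫⁻ t in Ioi r, ENNReal.ofReal (φ t / t) ≤ ENNReal.ofReal (C * φ r)) :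
    (∃ C' : ℝ≥0∞, 0 < C' ∧ C' ≠ ⊤ ∧
      ∀ f : EuclideanSpace ℝ (Fin n) → ℝ, LocallyIntegrable f volume → campNorm Φ φ f < ⊤ →
        ∃ σ : ℝ,
          (∀ a : EuclideanSpace ℝ (Fin n),
            Tendsto (fun r : ℝ => ⨍ y in ball a r, f y) atTop (𝓝 σ)) ∧
          omNorm Φ φ (fun x => f x - σ) ≤ C' * campNorm Φ φ f ∧
          campNorm Φ φ f ≤ C' * omNorm Φ φ (fun x => f x - σ)) ∧
    (∀ f : EuclideanSpace ℝ (Fin n) → ℝ, LocallyIntegrable f volume → omNorm Φ φ f < ⊤ →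
      (∀ a : EuclideanSpace ℝ (Fin n),
        Tendsto (fun r : ℝ => ⨍ y in ball a r, f y) atTop (𝓝 0)) ∧
      campNorm Φ φ f ≤ 2 * omNorm Φ φ f) := by
  obtain ⟨D, hD, hΔ : IsDelta2With D Φ⟩ := hΔ
  obtain ⟨K, hK, hlog⟩ := exists_hasLogDecay hpos hdec hC hint
  obtain ⟨R, hR, hφR⟩ := hlog.exists_mul_le hK hD
  have hφ := hlog.tendsto_atTop_zero hpos
  have hRn : 1 ≤ ENNReal.ofReal (R ^ n) := ENNReal.one_le_ofReal.2 (one_le_pow₀ hR.le)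
  refine ⟨⟨1 + ENNReal.ofReal (R ^ n), by positivity, by finiteness, fun f hf hfin => ?_⟩,
    fun f hf hfin => ⟨tendsto_average_of_omNorm_lt_top hY hΔ hpos hφ hf hfin,
      campNorm_le_two_mul_omNorm hY hΔ hpos hf⟩⟩
  obtain ⟨σ, hlim, hle⟩ :=
    exists_tendsto_average_and_omNorm_sub_le hY hΔ hD hpos hφ hR hφR hf hfin
  refine ⟨σ, hlim, hle, ?_⟩
  calc campNorm Φ φ f = campNorm Φ φ (fun x => f x - σ) := (campNorm_sub_const hf σ).symm
    _ ≤ 2 * omNorm Φ φ (fun x => f x - σ) :=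
        campNorm_le_two_mul_omNorm hY hΔ hpos (hf.sub (locallyIntegrable_const σ))
    _ ≤ (1 + ENNReal.ofReal (R ^ n)) * omNorm Φ φ (fun x => f x - σ) := by
        rw [← one_add_one_eq_two]
        gcongr

/-- for `Φ ∈ Δ₂` and `φ ∈ 𝒢^dec` with `∫_r^∞ φ(t)/t dt ≤ C φ(r)`,
the Orlicz–Campanato space modulo constants coincides with the Orlicz–Morrey space:
for `f ∈ 𝓛^{(Φ,φ)}` the limit `σ(f) = lim_{r→∞} f_{B(0,r)}` exists,
`f − σ(f) ∈ L^{(Φ,φ)}` with norm comparable to `‖f‖_{𝓛^{(Φ,φ)}}`; and conversely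
every `f ∈ L^{(Φ,φ)}` lies in `𝓛^{(Φ,φ)}` with `σ(f) = 0` and
`‖f‖_{𝓛^{(Φ,φ)}} ≤ 3 ‖f‖_{L^{(Φ,φ)}}`. -/
theorem stmt13 {n : ℕ} (Φ : ℝ≥0∞ → ℝ≥0∞) (hY : IsYoung Φ)
    (hΔ : ∃ C : ℝ, 0 < C ∧ ∀ t : ℝ≥0∞, 0 < t → Φ (2 * t) ≤ ENNReal.ofReal C * Φ t)
    (φ : ℝ → ℝ) (hφ : Gdec n φ) (C : ℝ) (hC : 0 < C)
    (hint : ∀ r : ℝ, 0 < r →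
      ∫⁻ t in Set.Ioi r, ENNReal.ofReal (φ t / t) ≤ ENNReal.ofReal (C * φ r)) :
    (∃ C' : ℝ≥0∞, 0 < C' ∧ C' ≠ ⊤ ∧
      ∀ f : EuclideanSpace ℝ (Fin n) → ℝ, LocallyIntegrable f volume →
        campNorm Φ φ f < ⊤ →
        ∃ σ : ℝ,
          (∀ a : EuclideanSpace ℝ (Fin n),
            Filter.Tendsto (fun r : ℝ => ⨍ y in ball a r, f y) Filter.atTop (nhds σ)) ∧
          omNorm Φ φ (fun x => f x - σ) ≤ C' * campNorm Φ φ f ∧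
          campNorm Φ φ f ≤ C' * omNorm Φ φ (fun x => f x - σ)) ∧
    (∀ f : EuclideanSpace ℝ (Fin n) → ℝ, LocallyIntegrable f volume →
      omNorm Φ φ f < ⊤ →
      (∀ a : EuclideanSpace ℝ (Fin n),
        Filter.Tendsto (fun r : ℝ => ⨍ y in ball a r, f y) Filter.atTop (nhds 0)) ∧
      campNorm Φ φ f ≤ 3 * omNorm Φ φ f) := by
  obtain ⟨hcamp, hom⟩ := stmt13_general (n := n) Φ hY hΔ φ hφ.1 hφ.2.1 C hC hint
  exact ⟨hcamp, fun f hf hfin => (hom f hf hfin).imp_right (·.trans (by gcongr; norm_num))⟩
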